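/- arXiv:2207.08574 — 3 statements merged into one kernel-verified Lean document; each statement's English description precedes it below -/
import Mathlib

section
/- Let d ≥ 1 and let K1 and K2 be d×d real symmetric positive definite matrices. Suppose φ ∈ ℝ^d is a unit vector (‖φ‖ = 1) that is a shared eigenvector of K1 and K2, i.e., K1·φ = λ1·φ and K2·φ = λ2·φ for real numbers λ1 > 0 and λ2 > 0. Then |√(λ1·λ2)·(log λ1 − log λ2)| ≤ 2·∑_{i=1}^d ∑_{j=1}^d |K1(i,j) − K2(i,j)|·|φ(i)|·|φ(j)|. -/
open Matrix

theorem scalar_aux (a b : ℝ) (ha : 0 < a) (hb : 0 < b) (hab : b ≤ a) :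
    |Real.sqrt (a * b) * (Real.log a - Real.log b)| ≤ 2 * |a - b| := by
  obtain ⟨s, hs, rfl⟩ : ∃ s, 0 < s ∧ a = s ^ 2 :=
    ⟨√a, Real.sqrt_pos.2 ha, (Real.sq_sqrt ha.le).symm⟩
  obtain ⟨t, ht, rfl⟩ : ∃ t, 0 < t ∧ b = t ^ 2 :=
    ⟨√b, Real.sqrt_pos.2 hb, (Real.sq_sqrt hb.le).symm⟩
  have hts : t ≤ s := by nlinarith
  have hlog : Real.log t ≤ Real.log s := Real.log_le_log ht hts
  rw [← mul_pow, Real.sqrt_sq (by positivity), Real.log_pow, Real.log_pow]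
  push_cast
  rw [abs_of_nonneg (mul_nonneg (by positivity) (by linarith)), abs_of_nonneg (by linarith)]
  have h := Real.log_le_sub_one_of_pos (div_pos hs ht)
  rw [Real.log_div hs.ne' ht.ne'] at h
  have h3 : s * t * (Real.log s - Real.log t) ≤ s * t * (s / t - 1) :=
    mul_le_mul_of_nonneg_left h (by positivity)
  have h4 : s * t * (s / t - 1) = s ^ 2 - s * t := by field_simp
  nlinarith

/-- Proposition 1 of the paper: bound on the eigenvalue of the Riemannian difference
operator associated with a shared unit eigenvector of two SPD kernels. -/
theorem spd_shared_eigvec_diff_eigenvalue_bound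
    (d : ℕ) (hd : 1 ≤ d) (K1 K2 : Matrix (Fin d) (Fin d) ℝ)
    (hK1 : K1.PosDef) (hK2 : K2.PosDef)
    (φ : EuclideanSpace ℝ (Fin d)) (hφ : ‖φ‖ = 1)
    (l1 l2 : ℝ) (hl1 : 0 < l1) (hl2 : 0 < l2)
    (h1 : K1 *ᵥ φ = l1 • (φ : Fin d → ℝ))
    (h2 : K2 *ᵥ φ = l2 • (φ : Fin d → ℝ)) :
    |Real.sqrt (l1 * l2) * (Real.log l1 - Real.log l2)| ≤
      2 * ∑ i, ∑ j, |K1 i j - K2 i j| * |φ i| * |φ j| := by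
  have hsc : |Real.sqrt (l1 * l2) * (Real.log l1 - Real.log l2)| ≤ 2 * |l1 - l2| := by
    rcases le_total l2 l1 with h | h
    · exact scalar_aux l1 l2 hl1 hl2 h
    · have := scalar_aux l2 l1 hl2 hl1 h
      rwa [abs_sub_comm l2 l1, abs_mul, abs_sub_comm (Real.log l2), ← abs_mul, mul_comm l2] at this
  have hn : ∑ i, φ i * φ i = 1 := by
    have h := EuclideanSpace.real_norm_sq_eq φ
    rw [hφ] at h
    simp only [pow_two] at h
    linarith
  have e1 : ∀ i, ∑ j, K1 i j * φ j = l1 * φ i := fun i => by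
    simpa [Matrix.mulVec, dotProduct] using congrFun h1 i
  have e2 : ∀ i, ∑ j, K2 i j * φ j = l2 * φ i := fun i => by
    simpa [Matrix.mulVec, dotProduct] using congrFun h2 i
  have key : l1 - l2 = ∑ i, ∑ j, (K1 i j - K2 i j) * φ i * φ j := by
    have : ∀ i, ∑ j, (K1 i j - K2 i j) * φ i * φ j = (l1 - l2) * (φ i * φ i) := fun i => by
      calc _ = φ i * (∑ j, K1 i j * φ j - ∑ j, K2 i j * φ j) := by
            rw [← Finset.sum_sub_distrib, Finset.mul_sum]
            exact Finset.sum_congr rfl fun j _ => by ring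
        _ = _ := by rw [e1, e2]; ring
    simp only [this]
    rw [← Finset.mul_sum, hn, mul_one]
  refine hsc.trans (mul_le_mul_of_nonneg_left ?_ (by norm_num))
  rw [key]
  refine (Finset.abs_sum_le_sum_abs _ _).trans (Finset.sum_le_sum fun i _ => ?_)
  refine (Finset.abs_sum_le_sum_abs _ _).trans (Finset.sum_le_sum fun j _ => ?_)
  rw [abs_mul, abs_mul]
end

section
/- Let d ≥ 1 and let K1 and K2 be d×d real symmetric positive semidefinite matrices. Let φ ∈ ℝ^d be a unit vector with K1·φ = λ1·φ for some λ1 > 0, and let ψ ∈ ℝ^d be a unit vector with K2·ψ = λ2·ψ for some λ2 > 0. Suppose ψ = φ + e with ‖e‖ ≤ ε for some ε ≥ 0, and let a ≥ 0 be a constant such that vᵀ·K2·v ≤ a·‖v‖² for every v ∈ ℝ^d. Then |√(λ1·λ2)·(log λ1 − log λ2)| ≤ 2·∑_{i=1}^d ∑_{j=1}^d |K1(i,j) − K2(i,j)|·|φ(i)|·|φ(j)| + 2·a·ε·(2 + ε). -/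
open Matrix


lemma aux_log (x y : ℝ) (hx : 0 < x) (hy : 0 < y) (h : y ≤ x) :
    |Real.sqrt (x * y) * (Real.log x - Real.log y)| ≤ 2 * |x - y| := by
  obtain ⟨s, hs, rfl⟩ : ∃ s : ℝ, 0 < s ∧ s ^ 2 = x :=
    ⟨Real.sqrt x, Real.sqrt_pos.2 hx, Real.sq_sqrt hx.le⟩
  obtain ⟨t, ht, rfl⟩ : ∃ t : ℝ, 0 < t ∧ t ^ 2 = y :=
    ⟨Real.sqrt y, Real.sqrt_pos.2 hy, Real.sq_sqrt hy.le⟩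
  have hts : t ≤ s := by nlinarith
  have h1 : Real.log s - Real.log t ≤ s / t - 1 := by
    rw [← Real.log_div hs.ne' ht.ne']
    exact Real.log_le_sub_one_of_pos (div_pos hs ht)
  have h0 : 0 ≤ Real.log s - Real.log t := sub_nonneg.2 (Real.log_le_log ht hts)
  have hsq : Real.sqrt (s ^ 2 * t ^ 2) = s * t := by
    rw [← mul_pow, Real.sqrt_sq (by positivity)]
  have e1 : Real.log (s ^ 2) - Real.log (t ^ 2) = 2 * (Real.log s - Real.log t) := by
    rw [Real.log_pow, Real.log_pow]; push_cast; ring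
  rw [hsq, e1, abs_of_nonneg (by positivity), abs_of_nonneg (by linarith)]
  have h2 : s * t * (Real.log s - Real.log t) ≤ s * t * (s / t - 1) :=
    mul_le_mul_of_nonneg_left h1 (by positivity)
  have h3 : s * t * (s / t - 1) = s * (s - t) := by field_simp
  nlinarith

lemma aux_log_all (x y : ℝ) (hx : 0 < x) (hy : 0 < y) :
    |Real.sqrt (x * y) * (Real.log x - Real.log y)| ≤ 2 * |x - y| := by
  rcases le_total y x with h | h
  · exact aux_log x y hx hy h
  · have := aux_log y x hy hx h
    rwa [abs_mul, abs_sub_comm (Real.log y), abs_sub_comm y x, mul_comm y x, ← abs_mul] at this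

lemma aux_norm {d : ℕ} (v : EuclideanSpace ℝ (Fin d)) :
    (v : Fin d → ℝ) ⬝ᵥ (v : Fin d → ℝ) = ‖v‖ ^ 2 := by
  rw [EuclideanSpace.norm_sq_eq]
  simp [dotProduct, sq]

lemma aux_nonneg {d : ℕ} {K : Matrix (Fin d) (Fin d) ℝ} (hK : K.PosSemidef) (v : Fin d → ℝ) :
    0 ≤ v ⬝ᵥ (K *ᵥ v) := by
  simpa using hK.dotProduct_mulVec_nonneg v

lemma aux_symm {d : ℕ} {K : Matrix (Fin d) (Fin d) ℝ} (hK : K.PosSemidef) (u v : Fin d → ℝ) :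
    v ⬝ᵥ (K *ᵥ u) = u ⬝ᵥ (K *ᵥ v) := by
  have h : Kᵀ = K := by simpa using hK.isHermitian.eq
  rw [dotProduct_mulVec, ← mulVec_transpose, h, dotProduct_comm]

lemma aux_expand {d : ℕ} {K : Matrix (Fin d) (Fin d) ℝ} (hK : K.PosSemidef) (u v : Fin d → ℝ)
    (t : ℝ) : (u + t • v) ⬝ᵥ (K *ᵥ (u + t • v)) =
      v ⬝ᵥ (K *ᵥ v) * (t * t) + (2 * (u ⬝ᵥ (K *ᵥ v))) * t + u ⬝ᵥ (K *ᵥ u) := by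
  simp only [mulVec_add, mulVec_smul, dotProduct_add, add_dotProduct, smul_dotProduct,
    dotProduct_smul, smul_eq_mul, aux_symm hK u v]
  ring

/-- Proposition 2 of the paper: bound on the eigenvalue of the Riemannian difference
operator when the eigenvectors of the two PSD kernels are only approximately equal. -/
theorem spsd_approx_eigvec_diff_eigenvalue_bound
    (d : ℕ) (hd : 1 ≤ d) (K1 K2 : Matrix (Fin d) (Fin d) ℝ)
    (hK1 : K1.PosSemidef) (hK2 : K2.PosSemidef)
    (φ ψ e : EuclideanSpace ℝ (Fin d)) (hφ : ‖φ‖ = 1) (hψ : ‖ψ‖ = 1)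
    (l1 l2 : ℝ) (hl1 : 0 < l1) (hl2 : 0 < l2)
    (h1 : K1 *ᵥ φ = l1 • (φ : Fin d → ℝ))
    (h2 : K2 *ᵥ ψ = l2 • (ψ : Fin d → ℝ))
    (ε : ℝ) (hε : 0 ≤ ε) (hψe : ψ = φ + e) (he : ‖e‖ ≤ ε)
    (a : ℝ) (ha : 0 ≤ a)
    (haK : ∀ v : EuclideanSpace ℝ (Fin d), (v : Fin d → ℝ) ⬝ᵥ (K2 *ᵥ v) ≤ a * ‖v‖ ^ 2) :
    |Real.sqrt (l1 * l2) * (Real.log l1 - Real.log l2)| ≤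
      2 * ∑ i, ∑ j, |K1 i j - K2 i j| * |φ i| * |φ j| + 2 * a * ε * (2 + ε) := by
  have hp : (φ : Fin d → ℝ) ⬝ᵥ (K2 *ᵥ φ) ≤ a := by simpa [hφ] using haK φ
  have hq : (e : Fin d → ℝ) ⬝ᵥ (K2 *ᵥ e) ≤ a * ε ^ 2 :=
    (haK e).trans (mul_le_mul_of_nonneg_left (pow_le_pow_left₀ (norm_nonneg _) he 2) ha)
  have hp0 := aux_nonneg hK2 (φ : Fin d → ℝ)
  have hq0 := aux_nonneg hK2 (e : Fin d → ℝ)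
  have hdisc := discrim_le_zero (fun t => by
    rw [← aux_expand hK2 (φ : Fin d → ℝ) e t]; exact aux_nonneg hK2 _)
  have hE := aux_expand hK2 (φ : Fin d → ℝ) e 1
  have hL2 : (ψ : Fin d → ℝ) ⬝ᵥ (K2 *ᵥ ψ) = l2 := by
    rw [h2, dotProduct_smul, aux_norm, hψ]; simp
  have hL1 : (φ : Fin d → ℝ) ⬝ᵥ (K1 *ᵥ φ) = l1 := by
    rw [h1, dotProduct_smul, aux_norm, hφ]; simp
  have hψ' : (φ : Fin d → ℝ) + (1 : ℝ) • (e : Fin d → ℝ) = ψ := by rw [hψe]; simp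
  rw [hψ', hL2] at hE
  have hb : |(φ : Fin d → ℝ) ⬝ᵥ (K2 *ᵥ e)| ≤ a * ε := by
    apply abs_le_of_sq_le_sq _ (by positivity)
    have := mul_le_mul hq hp hp0 (by positivity)
    unfold discrim at hdisc
    nlinarith
  have hS : |(φ : Fin d → ℝ) ⬝ᵥ (K1 *ᵥ φ) - (φ : Fin d → ℝ) ⬝ᵥ (K2 *ᵥ φ)| ≤
      ∑ i, ∑ j, |K1 i j - K2 i j| * |φ i| * |φ j| := by
    rw [← dotProduct_sub, ← sub_mulVec]
    simp only [dotProduct, mulVec, Finset.mul_sum]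
    refine (Finset.abs_sum_le_sum_abs _ _).trans (Finset.sum_le_sum fun i _ => ?_)
    refine (Finset.abs_sum_le_sum_abs _ _).trans (Finset.sum_le_sum fun j _ => ?_)
    rw [abs_mul, abs_mul, Matrix.sub_apply]
    apply le_of_eq; ring
  refine (aux_log_all l1 l2 hl1 hl2).trans ?_
  rw [hL1] at hS
  have hfin : |l1 - l2| ≤ (∑ i, ∑ j, |K1 i j - K2 i j| * |φ i| * |φ j|) + a * ε * (2 + ε) := by
    rw [abs_le] at hS hb ⊢
    constructor <;> nlinarith
  linarith
end

section
/- For all real numbers a > 0 and b > 0, one has |√(a·b)·(log a − log b)| ≤ 2·|a − b|. -/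
theorem aux_sqrt_log (x y : ℝ) (hy : 0 < y) (h : y ≤ x) :
    |x * y * (Real.log (x ^ 2) - Real.log (y ^ 2))| ≤ 2 * |x ^ 2 - y ^ 2| := by
  have hx : 0 < x := lt_of_lt_of_le hy h
  have h1 : Real.log x - Real.log y ≤ x / y - 1 := by
    rw [← Real.log_div hx.ne' hy.ne']
    exact Real.log_le_sub_one_of_pos (div_pos hx hy)
  have h0 : Real.log y ≤ Real.log x := Real.log_le_log hy h
  have hxy : 0 < x * y := mul_pos hx hy
  have h2 := mul_le_mul_of_nonneg_left h1 hxy.le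
  have h3 : x * y * (x / y - 1) = x * (x - y) := by field_simp
  rw [Real.log_pow, Real.log_pow]
  push_cast
  rw [abs_of_nonneg (mul_nonneg hxy.le (by linarith)), abs_of_nonneg (by nlinarith)]
  nlinarith [mul_nonneg hy.le (sub_nonneg.2 h)]

/-- The key scalar inequality in the proof of Proposition 1:
`|√(ab)(log a − log b)| ≤ 2|a − b|` for positive `a`, `b`. -/
theorem sqrt_mul_log_sub_log_abs_le_two_abs_sub
    (a b : ℝ) (ha : 0 < a) (hb : 0 < b) :
    |Real.sqrt (a * b) * (Real.log a - Real.log b)| ≤ 2 * |a - b| := by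
  have key : ∀ a b : ℝ, 0 < a → 0 < b → b ≤ a →
      |Real.sqrt (a * b) * (Real.log a - Real.log b)| ≤ 2 * |a - b| := by
    intro a b ha hb h
    have := aux_sqrt_log (Real.sqrt a) (Real.sqrt b) (Real.sqrt_pos.2 hb) (Real.sqrt_le_sqrt h)
    rwa [Real.sq_sqrt ha.le, Real.sq_sqrt hb.le, ← Real.sqrt_mul ha.le] at this
  rcases le_total b a with h | h
  · exact key a b ha hb h
  · have := key b a hb ha h
    rwa [abs_mul, abs_sub_comm (Real.log b), abs_sub_comm b a, mul_comm b a, ← abs_mul] at this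
end
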